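/- arXiv:1702.06714 — 2 statements merged into one kernel-verified Lean document; each statement's English description precedes it below -/
import Mathlib

section
/- Let U ⊆ ℝⁿ be a connected open set, let D be a torsion-free affine connection on U with smooth Christoffel symbols Γ_{ij}^k, and let μ ∈ ℝ. If h : U → ℝ is a smooth solution of the affine quasi-Einstein equation ∂_i∂_j h − Σ_k Γ_{ij}^k ∂_k h = μ h (ρ_s)_{ij} on U, and if there is a point p ∈ U with h(p) = 0 and ∂_i h(p) = 0 for all i = 1,…,n, then h vanishes identically on U. -/
/-!
The equation writes every second derivative `∂_i ∂_j h` as a linear combination of `h` and the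
`∂_k h` with continuous coefficients. Thus the first jet `jet h = (h, ∂h)` satisfies
`‖D_v (jet h)‖ ≤ C ‖v‖ ‖jet h‖` (`norm_fderiv_jet_le`), with `C` locally bounded on `U`
(`continuousOn_coeffBound`). If the jet vanishes at `q`, Grönwall's inequality along the segments
issuing from `q` shows that it vanishes near `q`. So the zero set of the jet is open in `U`; it is
also closed in `U` by continuity, and contains `p`, hence is all of the connected set `U`.
-/

open scoped ContDiff

/-- Partial derivative `∂_i f` in coordinates on `ℝⁿ`. -/
noncomputable def pd {n : ℕ} (i : Fin n) (f : (Fin n → ℝ) → ℝ) : (Fin n → ℝ) → ℝ :=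
  fun x => fderiv ℝ f x (Pi.single i 1)

/-- Hessian `(Hess_h)_{ij} = ∂_i∂_j h − Σ_k Γ_{ij}^k ∂_k h` of `h` w.r.t. the connection `Γ`. -/
noncomputable def hessD {n : ℕ} (Γ : Fin n → Fin n → Fin n → (Fin n → ℝ) → ℝ)
    (h : (Fin n → ℝ) → ℝ) (i j : Fin n) : (Fin n → ℝ) → ℝ :=
  fun x => pd i (pd j h) x - ∑ k, Γ i j k x * pd k h x

/-- Ricci tensor
`ρ_{ij} = Σ_k (∂_k Γ_{ij}^k − ∂_i Γ_{kj}^k) + Σ_{k,l} (Γ_{kl}^k Γ_{ij}^l − Γ_{il}^k Γ_{kj}^l)`. -/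
noncomputable def ricciD {n : ℕ} (Γ : Fin n → Fin n → Fin n → (Fin n → ℝ) → ℝ)
    (i j : Fin n) : (Fin n → ℝ) → ℝ :=
  fun x => (∑ k, (pd k (Γ i j k) x - pd i (Γ k j k) x))
    + ∑ k, ∑ l, (Γ k l k x * Γ i j l x - Γ i l k x * Γ k j l x)

/-- Symmetrized Ricci tensor `(ρ_s)_{ij} = (ρ_{ij} + ρ_{ji})/2`. -/
noncomputable def ricciSymD {n : ℕ} (Γ : Fin n → Fin n → Fin n → (Fin n → ℝ) → ℝ)
    (i j : Fin n) : (Fin n → ℝ) → ℝ :=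
  fun x => (ricciD Γ i j x + ricciD Γ j i x) / 2

/-- The components `∂_i f` determine `df`. -/
lemma fderiv_apply_eq_sum_pd {n : ℕ} (f : (Fin n → ℝ) → ℝ) (x v : Fin n → ℝ) :
    fderiv ℝ f x v = ∑ i, v i * pd i f x := by
  conv_lhs => rw [pi_eq_sum_univ' v]
  simp [pd, map_sum]

lemma contDiffOn_pd {n : ℕ} {U : Set (Fin n → ℝ)} (hU : IsOpen U) {f : (Fin n → ℝ) → ℝ}
    (hf : ContDiffOn ℝ ∞ f U) (i : Fin n) : ContDiffOn ℝ ∞ (pd i f) U :=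
  (hf.fderiv_of_isOpen hU (by simp)).clm_apply contDiffOn_const

lemma continuousOn_ricciD {n : ℕ} {U : Set (Fin n → ℝ)} (hU : IsOpen U)
    {Γ : Fin n → Fin n → Fin n → (Fin n → ℝ) → ℝ}
    (hΓ : ∀ i j k, ContDiffOn ℝ ∞ (Γ i j k) U) (i j : Fin n) :
    ContinuousOn (ricciD Γ i j) U := by
  have h0 := fun i j k => (hΓ i j k).continuousOn
  have h1 := fun l i j k => (contDiffOn_pd hU (hΓ i j k) l).continuousOn
  unfold ricciD
  refine ContinuousOn.add ?_ ?_
  · exact continuousOn_finsetSum _ fun k _ => (h1 _ _ _ _).sub (h1 _ _ _ _)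
  · exact continuousOn_finsetSum _ fun k _ => continuousOn_finsetSum _ fun l _ =>
      ((h0 _ _ _).mul (h0 _ _ _)).sub ((h0 _ _ _).mul (h0 _ _ _))

/-- The first jet `x ↦ (h x, (∂_i h x)_i)` of `h` in coordinates, with the sup norm on its
values. -/
noncomputable def jet {n : ℕ} (h : (Fin n → ℝ) → ℝ) (x : Fin n → ℝ) : ℝ × (Fin n → ℝ) :=
  (h x, fun i => pd i h x)

lemma abs_le_norm_jet {n : ℕ} (h : (Fin n → ℝ) → ℝ) (x : Fin n → ℝ) : |h x| ≤ ‖jet h x‖ :=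
  norm_fst_le (jet h x)

lemma abs_pd_le_norm_jet {n : ℕ} (h : (Fin n → ℝ) → ℝ) (x : Fin n → ℝ) (i : Fin n) :
    |pd i h x| ≤ ‖jet h x‖ :=
  (norm_le_pi_norm (jet h x).2 i).trans (norm_snd_le (jet h x))

/-- An upper bound at `x` for the operator norm of the linear system that the quasi-Einstein
equation imposes on the first jet of a solution. -/
noncomputable def coeffBound {n : ℕ} (Γ : Fin n → Fin n → Fin n → (Fin n → ℝ) → ℝ) (μ : ℝ)
    (x : Fin n → ℝ) : ℝ :=
  n + ∑ i, ∑ j, (∑ k, |Γ i j k x| + |μ * ricciSymD Γ i j x|)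

lemma continuousOn_coeffBound {n : ℕ} {U : Set (Fin n → ℝ)} (hU : IsOpen U)
    {Γ : Fin n → Fin n → Fin n → (Fin n → ℝ) → ℝ}
    (hΓ : ∀ i j k, ContDiffOn ℝ ∞ (Γ i j k) U) (μ : ℝ) :
    ContinuousOn (coeffBound Γ μ) U := by
  have h0 := fun i j k => (hΓ i j k).continuousOn
  have h1 : ∀ i j, ContinuousOn (ricciSymD Γ i j) U := fun i j =>
    ((continuousOn_ricciD hU hΓ i j).add (continuousOn_ricciD hU hΓ j i)).div_const 2
  exact continuousOn_const.add <| continuousOn_finsetSum _ fun i _ =>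
    continuousOn_finsetSum _ fun j _ =>
      (continuousOn_finsetSum _ fun k _ => (h0 i j k).abs).add
        ((continuousOn_const.mul (h1 i j)).abs)

/-- The quasi-Einstein equation expresses the derivative of the first jet linearly in the jet
itself, whence this differential inequality. -/
lemma norm_fderiv_jet_le {n : ℕ} {Γ : Fin n → Fin n → Fin n → (Fin n → ℝ) → ℝ} {μ : ℝ}
    {h : (Fin n → ℝ) → ℝ} {x : Fin n → ℝ}
    (heq : ∀ i j, hessD Γ h i j x = μ * h x * ricciSymD Γ i j x)
    (v : Fin n → ℝ) :
    ‖((fderiv ℝ h x v, fun j => fderiv ℝ (pd j h) x v) : ℝ × (Fin n → ℝ))‖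
      ≤ coeffBound Γ μ x * ‖v‖ * ‖jet h x‖ := by
  set J := ‖jet h x‖ with hJ
  have hJ0 : 0 ≤ J := norm_nonneg _
  set S := ∑ i, ∑ j, (∑ k, |Γ i j k x| + |μ * ricciSymD Γ i j x|) with hS
  have hS0 : 0 ≤ S := by positivity
  have hC : coeffBound Γ μ x = n + S := rfl
  have hv : ∀ i, |v i| ≤ ‖v‖ := fun i => norm_le_pi_norm v i
  have hv0 := norm_nonneg v
  have hC0 : 0 ≤ coeffBound Γ μ x := by rw [hC]; positivity
  refine norm_prod_le_iff.2 ⟨?_, (pi_norm_le_iff_of_nonneg (by positivity)).2 fun j => ?_⟩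
  · rw [Real.norm_eq_abs]
    dsimp only
    rw [fderiv_apply_eq_sum_pd]
    calc |∑ i, v i * pd i h x| ≤ ∑ i, |v i * pd i h x| := Finset.abs_sum_le_sum_abs _ _
      _ ≤ ∑ _i : Fin n, ‖v‖ * J := by
          refine Finset.sum_le_sum fun i _ => ?_
          rw [abs_mul]
          exact mul_le_mul (hv i) (abs_pd_le_norm_jet h x i) (abs_nonneg _) hv0
      _ = n * ‖v‖ * J := by simp [mul_assoc]
      _ ≤ coeffBound Γ μ x * ‖v‖ * J := by
          rw [hC]; gcongr; linarith
  · rw [Real.norm_eq_abs]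
    dsimp only
    rw [fderiv_apply_eq_sum_pd]
    have hpd : ∀ i, |pd i (pd j h) x|
        ≤ (∑ k, |Γ i j k x| + |μ * ricciSymD Γ i j x|) * J := by
      intro i
      have e : pd i (pd j h) x
          = ∑ k, Γ i j k x * pd k h x + μ * ricciSymD Γ i j x * h x := by
        have := heq i j
        simp only [hessD] at this
        linarith
      rw [e, add_mul, Finset.sum_mul]
      refine (abs_add_le _ _).trans (add_le_add ?_ ?_)
      · refine (Finset.abs_sum_le_sum_abs _ _).trans (Finset.sum_le_sum fun k _ => ?_)
        rw [abs_mul]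
        exact mul_le_mul_of_nonneg_left (abs_pd_le_norm_jet h x k) (abs_nonneg _)
      · rw [abs_mul]
        exact mul_le_mul_of_nonneg_left (abs_le_norm_jet h x) (abs_nonneg _)
    calc |∑ i, v i * pd i (pd j h) x| ≤ ∑ i, |v i * pd i (pd j h) x| :=
          Finset.abs_sum_le_sum_abs _ _
      _ ≤ ∑ i, ‖v‖ * ((∑ j, (∑ k, |Γ i j k x| + |μ * ricciSymD Γ i j x|)) * J) := by
          refine Finset.sum_le_sum fun i _ => ?_
          rw [abs_mul]
          refine mul_le_mul (hv i) ((hpd i).trans ?_) (abs_nonneg _) hv0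
          gcongr
          exact Finset.single_le_sum
            (f := fun j => ∑ k, |Γ i j k x| + |μ * ricciSymD Γ i j x|)
            (fun j _ => by positivity) (Finset.mem_univ j)
      _ = S * ‖v‖ * J := by
          rw [← Finset.mul_sum, ← Finset.sum_mul, ← hS]; ring
      _ ≤ coeffBound Γ μ x * ‖v‖ * J := by
          rw [hC]; gcongr; simp

/-- a smooth solution of the affine quasi-Einstein equation on a connected open
set which vanishes to first order at some point vanishes identically. -/
theorem statement2 {n : ℕ} (U : Set (Fin n → ℝ)) (hU : IsOpen U) (hUconn : IsConnected U)
    (Γ : Fin n → Fin n → Fin n → (Fin n → ℝ) → ℝ)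
    (hΓ : ∀ i j k, ContDiffOn ℝ ∞ (Γ i j k) U)
    (hΓsym : ∀ i j k, Γ i j k = Γ j i k)
    (μ : ℝ) (h : (Fin n → ℝ) → ℝ) (hh : ContDiffOn ℝ ∞ h U)
    (heq : ∀ x ∈ U, ∀ i j, hessD Γ h i j x = μ * h x * ricciSymD Γ i j x)
    (p : Fin n → ℝ) (hp : p ∈ U) (hp0 : h p = 0) (hdp : ∀ i, pd i h p = 0) :
    ∀ x ∈ U, h x = 0 := by
  have hJd : ∀ x ∈ U, ∀ j, DifferentiableAt ℝ (pd j h) x := fun x hx j =>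
    ((contDiffOn_pd hU hh j).differentiableOn (by simp)).differentiableAt (hU.mem_nhds hx)
  have hhd : ∀ x ∈ U, DifferentiableAt ℝ h x := fun x hx =>
    (hh.differentiableOn (by simp)).differentiableAt (hU.mem_nhds hx)
  have hJcont : ContinuousOn (jet h) U := hh.continuousOn.prodMk
    (continuousOn_pi.2 fun j => (contDiffOn_pd hU hh j).continuousOn)
  have hloc : ∀ q ∈ U, jet h q = 0 → ∀ᶠ x in nhds q, jet h x = 0 := by
    intro q hq hq0
    have hb : ∀ᶠ x in nhds q, coeffBound Γ μ x < coeffBound Γ μ q + 1 :=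
      ((continuousOn_coeffBound hU hΓ μ).continuousAt (hU.mem_nhds hq)).eventually_lt_const
        (lt_add_one _)
    obtain ⟨r, hr, hball⟩ := Metric.eventually_nhds_iff_ball.1 (hb.and (hU.mem_nhds hq))
    filter_upwards [Metric.ball_mem_nhds q hr] with x hx
    set v := x - q with hv
    have hmem : ∀ t ∈ Set.Icc (0 : ℝ) 1, q + t • v ∈ Metric.ball q r := fun t ht =>
      (convex_ball q r).add_smul_sub_mem (Metric.mem_ball_self hr) hx ht
    have hline : ∀ t : ℝ, HasDerivAt (fun t : ℝ => q + t • v) v t := fun t => by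
      simpa using ((hasDerivAt_id t).smul_const v).const_add q
    have hder : ∀ t ∈ Set.Icc (0 : ℝ) 1, HasDerivAt (fun t : ℝ => jet h (q + t • v))
        (fderiv ℝ h (q + t • v) v, fun j => fderiv ℝ (pd j h) (q + t • v) v) t := by
      intro t ht
      have hU' := (hball _ (hmem t ht)).2
      exact ((hhd _ hU').hasFDerivAt.comp_hasDerivAt t (hline t)).prodMk
        (hasDerivAt_pi.2 fun j => HasFDerivAt.comp_hasDerivAt (f := fun t : ℝ => q + t • v) t
          (hJd _ hU' j).hasFDerivAt (hline t))
    have key := eq_zero_of_abs_deriv_le_mul_abs_self_of_eq_zero_right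
      (f := fun t : ℝ => jet h (q + t • v)) (a := 0) (b := 1)
      (K := (coeffBound Γ μ q + 1) * ‖v‖)
      (fun t ht => (hder t ht).continuousAt.continuousWithinAt)
      (fun t ht => (hder t (Set.Ico_subset_Icc_self ht)).hasDerivWithinAt)
      (by simp [hq0])
      (fun t ht => by
        have hb' := hball _ (hmem t (Set.Ico_subset_Icc_self ht))
        refine (norm_fderiv_jet_le (heq _ hb'.2) v).trans ?_
        gcongr
        exact hb'.1.le)
      1 (by simp)
    simpa [hv] using key
  have hsub : U ⊆ interior {x | jet h x = 0} := by
    refine hUconn.isPreconnected.subset_of_closure_inter_subset isOpen_interior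
      ⟨p, hp, mem_interior_iff_mem_nhds.2 (hloc p hp ?_)⟩ ?_
    · exact Prod.ext hp0 (funext hdp)
    · rintro x ⟨hxc, hxU⟩
      refine mem_interior_iff_mem_nhds.2 (hloc x hxU ?_)
      have hx := (hJcont.continuousAt (hU.mem_nhds hxU)).continuousWithinAt.mem_closure hxc
        (t := {0}) (fun y hy => interior_subset (s := {x | jet h x = 0}) hy)
      simpa using hx
  intro x hx
  exact congrArg Prod.fst (interior_subset (s := {x | jet h x = 0}) (hsub hx))
end

section
/- Let κ ∈ ℝ with κ ≠ 0 and κ ≠ −2, and let S = {(x¹,x²) ∈ ℝ² : x¹ + x² > 0}. A smooth function h : S → ℝ satisfies the system ∂₁²h = (κ/(x¹+x²)) ∂₁h, ∂₂²h = (κ/(x¹+x²)) ∂₂h, ∂₁∂₂h = (κ+1)κ h/(x¹+x²)² on S if and only if there exists a constant c ∈ ℝ such that h(x¹,x²) = c (x¹+x²)^{κ+1}. (Equivalently, for μ = κ+1 one has E_κ(μ) = (x¹+x²)^{κ+1}·ℝ.) -/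
/-!
Write `s = x¹ + x²`. Computing the third derivative `∂₁∂₁∂₂h` in two ways (by differentiating the
equation for `∂₁²h` in the direction `x²`, and the equation for `∂₁∂₂h` in the direction `x¹`) gives
`κ(κ+2) ∂₁h = κ(κ+1)(κ+2) h / s`, hence `∂₁h = (κ+1) h / s`; the same computation with the roles of
the coordinates exchanged gives `∂₂h = (κ+1) h / s`. Thus `s^{-(κ+1)} h` has zero differential on
the convex set `{s > 0}`, so it is constant. The converse is a direct computation.
The product rule `pd_comp_sum_mul` and the symmetry of second derivatives `pd_comm` carry the
argument.
-/

open scoped ContDiff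

theorem isOpen_halfPlane : IsOpen {y : Fin 2 → ℝ | 0 < y 0 + y 1} :=
  isOpen_lt continuous_const (by fun_prop)

theorem pd_congr {n : ℕ} {S : Set (Fin n → ℝ)} (hS : IsOpen S) {f g : (Fin n → ℝ) → ℝ}
    (hfg : ∀ y ∈ S, f y = g y) (i : Fin n) {x : Fin n → ℝ} (hx : x ∈ S) :
    pd i f x = pd i g x := by
  have h : f =ᶠ[nhds x] g := Filter.eventually_of_mem (hS.mem_nhds hx) hfg
  simp only [pd, h.fderiv_eq]

theorem pd_contDiffOn {n : ℕ} {S : Set (Fin n → ℝ)} (hS : IsOpen S) {f : (Fin n → ℝ) → ℝ}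
    (hf : ContDiffOn ℝ ∞ f S) (i : Fin n) : ContDiffOn ℝ ∞ (pd i f) S :=
  (hf.fderiv_of_isOpen hS (by simp)).clm_apply contDiffOn_const

theorem pd_comm {n : ℕ} {S : Set (Fin n → ℝ)} (hS : IsOpen S) {f : (Fin n → ℝ) → ℝ}
    (hf : ContDiffOn ℝ ∞ f S) (i j : Fin n) {x : Fin n → ℝ} (hx : x ∈ S) :
    pd i (pd j f) x = pd j (pd i f) x := by
  have hfx : ContDiffAt ℝ ∞ f x := hf.contDiffAt (hS.mem_nhds hx)
  have hsymm : IsSymmSndFDerivAt ℝ f x :=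
    hfx.isSymmSndFDerivAt (by simp; exact WithTop.coe_le_coe.2 le_top)
  have hd : DifferentiableAt ℝ (fderiv ℝ f) x :=
    (((hf.fderiv_of_isOpen hS (m := ∞) (by simp)).contDiffAt (hS.mem_nhds hx)).differentiableAt
      (by simp))
  have key : ∀ a b : Fin n, pd a (pd b f) x
      = fderiv ℝ (fderiv ℝ f) x (Pi.single a 1) (Pi.single b 1) := by
    intro a b
    have := (hd.hasFDerivAt.clm_apply (hasFDerivAt_const (Pi.single b (1 : ℝ)) x)).fderiv
    unfold pd
    rw [this]
    simp
  rw [key, key]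
  exact hsymm _ _

/-- Product rule for a function of `x¹ + x²` times an arbitrary function: both partial
derivatives of the first factor are its ordinary derivative. -/
theorem pd_comp_sum_mul (i : Fin 2) {φ : ℝ → ℝ} {φ' : ℝ} {g : (Fin 2 → ℝ) → ℝ} {x : Fin 2 → ℝ}
    (hφ : HasDerivAt φ φ' (x 0 + x 1)) (hg : DifferentiableAt ℝ g x) :
    pd i (fun y => φ (y 0 + y 1) * g y) x = φ' * g x + φ (x 0 + x 1) * pd i g x := by
  have hs : HasFDerivAt (fun y : Fin 2 → ℝ => y 0 + y 1)
      (ContinuousLinearMap.proj (R := ℝ) (φ := fun _ : Fin 2 => ℝ) 0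
        + ContinuousLinearMap.proj (R := ℝ) (φ := fun _ : Fin 2 => ℝ) 1) x :=
    (hasFDerivAt_apply 0 x).add (hasFDerivAt_apply 1 x)
  have h1 := (hφ.comp_hasFDerivAt x hs).mul hg.hasFDerivAt
  have h2 : pd i (fun y => φ (y 0 + y 1) * g y) x = _ :=
    congrArg (fun L => L (Pi.single i 1)) h1.fderiv
  rw [h2]
  fin_cases i <;> simp [pd] <;> ring

theorem pd_comp_sum_mul_const (i : Fin 2) {φ : ℝ → ℝ} {φ' : ℝ} (c : ℝ) {x : Fin 2 → ℝ}
    (hφ : HasDerivAt φ φ' (x 0 + x 1)) :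
    pd i (fun y => φ (y 0 + y 1) * c) x = φ' * c := by
  rw [pd_comp_sum_mul i (g := fun _ => c) hφ (differentiableAt_const c)]
  simp [pd]

/-- The integrability condition: equating the two expressions for the third derivative
`∂_i∂_i∂_j h` reduces the second-order system to a first-order equation. -/
theorem first_order_of_system (κ : ℝ) (hκ : κ ≠ 0) (hκ2 : κ ≠ -2) {h : (Fin 2 → ℝ) → ℝ}
    (hh : ContDiffOn ℝ ∞ h {y : Fin 2 → ℝ | 0 < y 0 + y 1}) (i j : Fin 2)
    (hii : ∀ x ∈ {y : Fin 2 → ℝ | 0 < y 0 + y 1},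
      pd i (pd i h) x = κ / (x 0 + x 1) * pd i h x)
    (hij : ∀ x ∈ {y : Fin 2 → ℝ | 0 < y 0 + y 1},
      pd i (pd j h) x = (κ + 1) * κ * h x / (x 0 + x 1) ^ 2)
    {x : Fin 2 → ℝ} (hx : x ∈ {y : Fin 2 → ℝ | 0 < y 0 + y 1}) :
    pd i h x = (κ + 1) / (x 0 + x 1) * h x := by
  have hS := isOpen_halfPlane
  have hs : x 0 + x 1 ≠ 0 := ne_of_gt hx
  have diffAt : ∀ {g : (Fin 2 → ℝ) → ℝ}, ContDiffOn ℝ ∞ g {y : Fin 2 → ℝ | 0 < y 0 + y 1} →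
      DifferentiableAt ℝ g x := fun hg =>
    (hg.contDiffAt (hS.mem_nhds hx)).differentiableAt (by simp)
  have hi := pd_contDiffOn hS hh i
  have hinv : HasDerivAt (fun s : ℝ => κ / s) (-κ / (x 0 + x 1) ^ 2) (x 0 + x 1) := by
    simp only [div_eq_mul_inv κ]
    refine ((hasDerivAt_inv hs).const_mul κ).congr_deriv ?_
    ring
  have hinv2 : HasDerivAt (fun s : ℝ => (κ + 1) * κ / s ^ 2)
      (-2 * ((κ + 1) * κ) / (x 0 + x 1) ^ 3) (x 0 + x 1) := by
    simp only [div_eq_mul_inv ((κ + 1) * κ)]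
    refine (((hasDerivAt_pow 2 (x 0 + x 1)).inv (pow_ne_zero 2 hs)).const_mul
      ((κ + 1) * κ)).congr_deriv ?_
    field_simp
    push_cast
    ring
  have e1 : pd j (pd i (pd i h)) x
      = -κ / (x 0 + x 1) ^ 2 * pd i h x + κ / (x 0 + x 1) * pd j (pd i h) x := by
    rw [pd_congr hS hii j hx]
    exact pd_comp_sum_mul j hinv (diffAt hi)
  have e2 : pd i (pd i (pd j h)) x
      = -2 * ((κ + 1) * κ) / (x 0 + x 1) ^ 3 * h x
        + (κ + 1) * κ / (x 0 + x 1) ^ 2 * pd i h x := by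
    rw [pd_congr hS (g := fun y => (κ + 1) * κ / (y 0 + y 1) ^ 2 * h y)
      (fun y hy => by rw [hij y hy]; ring) i hx]
    exact pd_comp_sum_mul i hinv2 (diffAt hh)
  have e3 : pd j (pd i (pd i h)) x = pd i (pd i (pd j h)) x := by
    rw [pd_comm hS hi j i hx]
    exact pd_congr hS (fun y hy => pd_comm hS hh j i hy) i hx
  rw [e1, e2, pd_comm hS hh j i hx, hij x hx] at e3
  have hκ3 : κ * (κ + 2) ≠ 0 := mul_ne_zero hκ fun h0 => hκ2 (by linarith)
  field_simp at e3 ⊢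
  apply mul_left_cancel₀ hκ3
  linear_combination -κ * e3

/-- for `κ ≠ 0`, `κ ≠ −2` and `μ = κ + 1`, a smooth function on
`S = {x¹ + x² > 0}` satisfies `∂₁²h = (κ/(x¹+x²)) ∂₁h`, `∂₂²h = (κ/(x¹+x²)) ∂₂h`,
`∂₁∂₂h = (κ+1)κ h/(x¹+x²)²` iff `h = c (x¹+x²)^{κ+1}` for some constant `c`;
i.e. `E_κ(κ+1) = (x¹+x²)^{κ+1} · ℝ`. -/
theorem statement13 (κ : ℝ) (hκ : κ ≠ 0) (hκ2 : κ ≠ -2) (h : (Fin 2 → ℝ) → ℝ)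
    (hh : ContDiffOn ℝ ∞ h {y : Fin 2 → ℝ | 0 < y 0 + y 1}) :
    (∀ x ∈ {y : Fin 2 → ℝ | 0 < y 0 + y 1},
      pd 0 (pd 0 h) x = κ / (x 0 + x 1) * pd 0 h x ∧
      pd 1 (pd 1 h) x = κ / (x 0 + x 1) * pd 1 h x ∧
      pd 0 (pd 1 h) x = (κ + 1) * κ * h x / (x 0 + x 1) ^ 2)
    ↔ ∃ c : ℝ, ∀ x ∈ {y : Fin 2 → ℝ | 0 < y 0 + y 1},
        h x = c * (x 0 + x 1) ^ (κ + 1) := by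
  have hS := isOpen_halfPlane
  constructor
  · intro hsys
    have hd0 : ∀ x ∈ {y : Fin 2 → ℝ | 0 < y 0 + y 1},
        pd 0 h x = (κ + 1) / (x 0 + x 1) * h x := fun x hx =>
      first_order_of_system κ hκ hκ2 hh 0 1 (fun y hy => (hsys y hy).1)
        (fun y hy => (hsys y hy).2.2) hx
    have hd1 : ∀ x ∈ {y : Fin 2 → ℝ | 0 < y 0 + y 1},
        pd 1 h x = (κ + 1) / (x 0 + x 1) * h x := fun x hx =>
      first_order_of_system κ hκ hκ2 hh 1 0 (fun y hy => (hsys y hy).2.1)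
        (fun y hy => by rw [pd_comm hS hh 1 0 hy]; exact (hsys y hy).2.2) hx
    have hdi : ∀ i : Fin 2, ∀ x ∈ {y : Fin 2 → ℝ | 0 < y 0 + y 1},
        pd i h x = (κ + 1) / (x 0 + x 1) * h x := by
      intro i
      fin_cases i
      exacts [hd0, hd1]
    have hdiff : ∀ x ∈ {y : Fin 2 → ℝ | 0 < y 0 + y 1}, DifferentiableAt ℝ h x := fun x hx =>
      (hh.contDiffAt (hS.mem_nhds hx)).differentiableAt (by simp)
    let F : (Fin 2 → ℝ) → ℝ := fun y => (y 0 + y 1) ^ (-(κ + 1)) * h y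
    have hconv : Convex ℝ {y : Fin 2 → ℝ | 0 < y 0 + y 1} := by
      intro a ha b hb s t hs ht hst
      simp only [Set.mem_ofPred_eq, Pi.add_apply, Pi.smul_apply, smul_eq_mul] at *
      have : 0 < s * (a 0 + a 1) + t * (b 0 + b 1) := by
        rcases hs.eq_or_lt with rfl | hs
        · have : t = 1 := by linarith
          subst this
          linarith
        · have := mul_pos hs ha
          have := mul_nonneg ht hb.le
          linarith
      linarith
    have hFdiff : DifferentiableOn ℝ F {y : Fin 2 → ℝ | 0 < y 0 + y 1} := by
      intro x hx
      have hx0 : x 0 + x 1 ≠ 0 := ne_of_gt hx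
      refine (DifferentiableAt.mul ?_ (hdiff x hx)).differentiableWithinAt
      exact DifferentiableAt.rpow_const (by fun_prop) (Or.inl hx0)
    have hF0 : Set.EqOn (fderiv ℝ F) 0 {y : Fin 2 → ℝ | 0 < y 0 + y 1} := by
      intro x hx
      have hx' : 0 < x 0 + x 1 := hx
      have hpd : ∀ i : Fin 2, fderiv ℝ F x (Pi.single i 1) = 0 := by
        intro i
        have := pd_comp_sum_mul i
          (Real.hasDerivAt_rpow_const (p := -(κ + 1)) (Or.inl hx'.ne')) (hdiff x hx)
        rw [hdi i x hx, Real.rpow_sub_one hx'.ne'] at this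
        refine Eq.trans this ?_
        ring
      apply ContinuousLinearMap.coe_injective
      refine (Pi.basisFun ℝ (Fin 2)).ext fun i => ?_
      simpa using hpd i
    obtain ⟨c, hc⟩ := hS.exists_is_const_of_fderiv_eq_zero hconv.isPreconnected hFdiff hF0
    refine ⟨c, fun x hx => ?_⟩
    have hx' : 0 < x 0 + x 1 := hx
    rw [← hc x hx]
    simp only [F]
    rw [mul_right_comm, ← Real.rpow_add hx']
    simp
  · rintro ⟨c, hc⟩
    have hd : ∀ i : Fin 2, ∀ x ∈ {y : Fin 2 → ℝ | 0 < y 0 + y 1},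
        pd i h x = (x 0 + x 1) ^ κ * ((κ + 1) * c) := by
      intro i x hx
      have hx' : 0 < x 0 + x 1 := hx
      rw [pd_congr hS (g := fun y => (y 0 + y 1) ^ (κ + 1) * c)
        (fun y hy => by rw [hc y hy, mul_comm]) i hx,
        pd_comp_sum_mul_const i c (Real.hasDerivAt_rpow_const (p := κ + 1) (Or.inl hx'.ne'))]
      rw [add_sub_cancel_right]
      ring
    have hdd : ∀ i j : Fin 2, ∀ x ∈ {y : Fin 2 → ℝ | 0 < y 0 + y 1},
        pd i (pd j h) x = κ * ((x 0 + x 1) ^ κ / (x 0 + x 1)) * ((κ + 1) * c) := by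
      intro i j x hx
      have hx' : 0 < x 0 + x 1 := hx
      rw [pd_congr hS (hd j) i hx, pd_comp_sum_mul_const i _
        (Real.hasDerivAt_rpow_const (p := κ) (Or.inl hx'.ne')), Real.rpow_sub_one hx'.ne']
    intro x hx
    have hx' : 0 < x 0 + x 1 := hx
    rw [hdd 0 0 x hx, hdd 1 1 x hx, hdd 0 1 x hx, hd 0 x hx, hd 1 x hx, hc x hx,
      Real.rpow_add_one hx'.ne']
    refine ⟨?_, ?_, ?_⟩ <;> field_simp
end
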